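/- Trace of the E-SSW on the isotropic pair-entangled network state: for 0 ≤ p ≤ 1, let ρ_p = p·Φ + ((1−p)/d²)·I on each edge and ρ = ⊗_{e∈E} ρ_p on the total space, and let W_E = −d · ⊗_{e∈E} Φ_e + ((d+1)^{1−|E|}/2) · ⊗_{e∈E} (I_e + d·Φ_e). Then Tr(W_E ρ) = ((d+1)/2) · ((1+(d−1)p)/d)^{|E|} − d · ((1+(d²−1)p)/d²)^{|E|}. -/

import Mathlib

open Matrix Finset
open scoped ComplexOrder

/-- The projector onto the maximally entangled state on `ℂ^d ⊗ ℂ^d`. -/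
noncomputable def phiM (d : ℕ) : Matrix (Fin d × Fin d) (Fin d × Fin d) ℂ :=
  Matrix.of fun p q => if p.1 = p.2 ∧ q.1 = q.2 then (1 : ℂ) / d else 0

/-- The `E`-SSW: `W_E = −d·⊗_{e∈E} Φ_e + ((d+1)^{1−|E|}/2)·⊗_{e∈E}(I_e + d·Φ_e)`. -/
noncomputable def WE (d : ℕ) (E : Type*) [Fintype E] [DecidableEq E] :
    Matrix (E → Fin d × Fin d) (E → Fin d × Fin d) ℂ :=
  (-(d : ℂ)) • Matrix.of (fun x y => ∏ e, phiM d (x e) (y e))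
    + ((((d : ℂ) + 1) ^ ((1 : ℤ) - (Fintype.card E : ℤ)) / 2)) •
      Matrix.of (fun x y => ∏ e, ((1 : Matrix (Fin d × Fin d) (Fin d × Fin d) ℂ)
        + (d : ℂ) • phiM d) (x e) (y e))

/-- The isotropic pair-entangled network state `⊗_{e∈E} (p·Φ + ((1−p)/d²)·I)`. -/
noncomputable def ipen (d : ℕ) (E : Type*) [Fintype E] [DecidableEq E] (p : ℝ) :
    Matrix (E → Fin d × Fin d) (E → Fin d × Fin d) ℂ :=
  Matrix.of fun x y => ∏ e,
    ((p : ℂ) • phiM d + ((1 - (p : ℂ)) / (d : ℂ) ^ 2) •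
      (1 : Matrix (Fin d × Fin d) (Fin d × Fin d) ℂ)) (x e) (y e)

/-!
Traces of tensor products multiply over the edges, so `Tr(W_E ρ)` is a combination of two
`|E|`-th powers of one-edge traces. Each of those is linear algebra in the span of `I` and `Φ`,
where only `Φ² = Φ`, `Tr Φ = 1` and `Tr I = d²` matter; the factor `(d+1)^|E|` produced by
`I + d·Φ` is cancelled, up to one `d+1`, by the normalization `(d+1)^{1-|E|}` of the witness.
-/

section PiKronecker

variable {ι R : Type*} [Fintype ι] [CommSemiring R] {l m n : ι → Type*}

/-- The tensor product `⊗ i, A i` of a finite family of matrices, with rows and columns indexed by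
dependent functions: the `ι`-ary version of `Matrix.kronecker`. -/
def piKronecker (A : ∀ i, Matrix (m i) (n i) R) : Matrix (∀ i, m i) (∀ i, n i) R :=
  Matrix.of fun x y => ∏ i, A i (x i) (y i)

theorem piKronecker_mul_piKronecker [DecidableEq ι] [∀ i, Fintype (m i)]
    (A : ∀ i, Matrix (l i) (m i) R) (B : ∀ i, Matrix (m i) (n i) R) :
    piKronecker A * piKronecker B = piKronecker fun i => A i * B i := by
  ext x z
  simp only [piKronecker, Matrix.mul_apply, Matrix.of_apply, Fintype.prod_sum,
    Finset.prod_mul_distrib]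

theorem trace_piKronecker [DecidableEq ι] [∀ i, Fintype (n i)] (A : ∀ i, Matrix (n i) (n i) R) :
    (piKronecker A).trace = ∏ i, (A i).trace := by
  simp only [piKronecker, Matrix.trace, Matrix.diag_apply, Matrix.of_apply, Fintype.prod_sum]

theorem trace_piKronecker_const_mul_piKronecker_const [DecidableEq ι] {k : Type*} [Fintype k]
    (A B : Matrix k k R) :
    (piKronecker (fun _ : ι => A) * piKronecker fun _ : ι => B).trace
      = (A * B).trace ^ Fintype.card ι := by
  rw [piKronecker_mul_piKronecker, trace_piKronecker, Finset.prod_const, Finset.card_univ]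

end PiKronecker

section Idempotent

variable {n R : Type*} [Fintype n] [DecidableEq n] [CommSemiring R] {P : Matrix n n R}

theorem trace_mul_smul_add_smul_one_of_isIdempotentElem (hP : IsIdempotentElem P) (a b : R) :
    (P * (a • P + b • (1 : Matrix n n R))).trace = (a + b) * P.trace := by
  rw [mul_add, Matrix.mul_smul, Matrix.mul_smul, hP.eq, mul_one, ← add_smul, Matrix.trace_smul,
    smul_eq_mul]

theorem trace_one_add_smul_mul_smul_add_smul_one_of_isIdempotentElem (hP : IsIdempotentElem P)
    (c a b : R) :
    ((1 + c • P) * (a • P + b • (1 : Matrix n n R))).trace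
      = (a + c * (a + b)) * P.trace + b * Fintype.card n := by
  rw [add_mul, one_mul, Matrix.smul_mul, Matrix.trace_add, Matrix.trace_smul,
    trace_mul_smul_add_smul_one_of_isIdempotentElem hP, Matrix.trace_add, Matrix.trace_smul,
    Matrix.trace_smul, Matrix.trace_one]
  simp only [smul_eq_mul]
  ring

end Idempotent

section OneEdge

variable {d : ℕ}

theorem trace_phiM (hd : d ≠ 0) : (phiM d).trace = 1 := by
  simp [Matrix.trace, phiM, Fintype.sum_prod_type, hd]

theorem isIdempotentElem_phiM (hd : d ≠ 0) : IsIdempotentElem (phiM d) := by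
  ext ⟨i, j⟩ ⟨k, l⟩
  by_cases hij : i = j <;> by_cases hkl : k = l <;>
    simp [Matrix.mul_apply, phiM, Fintype.sum_prod_type, hij, hkl, hd]

/-- The isotropic operator `p·Φ + ((1−p)/d²)·I` on a single edge, the tensor factor of `ipen`;
`p` is allowed to be any complex number. -/
noncomputable def isotropic (d : ℕ) (p : ℂ) : Matrix (Fin d × Fin d) (Fin d × Fin d) ℂ :=
  p • phiM d + ((1 - p) / (d : ℂ) ^ 2) • (1 : Matrix (Fin d × Fin d) (Fin d × Fin d) ℂ)

theorem trace_phiM_mul_isotropic (hd : d ≠ 0) (p : ℂ) :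
    (phiM d * isotropic d p).trace = (1 + ((d : ℂ) ^ 2 - 1) * p) / (d : ℂ) ^ 2 := by
  rw [isotropic, trace_mul_smul_add_smul_one_of_isIdempotentElem (isIdempotentElem_phiM hd),
    trace_phiM hd]
  field_simp
  ring

theorem trace_one_add_smul_phiM_mul_isotropic (hd : d ≠ 0) (p : ℂ) :
    ((1 + (d : ℂ) • phiM d) * isotropic d p).trace
      = ((d : ℂ) + 1) * ((1 + ((d : ℂ) - 1) * p) / (d : ℂ)) := by
  rw [isotropic, trace_one_add_smul_mul_smul_add_smul_one_of_isIdempotentElem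
    (isIdempotentElem_phiM hd), trace_phiM hd, Fintype.card_prod, Fintype.card_fin]
  push_cast
  field_simp
  ring

end OneEdge

section Network

variable (d : ℕ) (E : Type*) [Fintype E] [DecidableEq E]

theorem WE_eq_piKronecker :
    WE d E = (-(d : ℂ)) • piKronecker (fun _ : E => phiM d)
      + (((d : ℂ) + 1) ^ ((1 : ℤ) - (Fintype.card E : ℤ)) / 2) •
        piKronecker fun _ : E => 1 + (d : ℂ) • phiM d :=
  rfl

theorem ipen_eq_piKronecker (p : ℝ) : ipen d E p = piKronecker fun _ : E => isotropic d p :=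
  rfl

theorem trace_WE_mul_piKronecker_const (A : Matrix (Fin d × Fin d) (Fin d × Fin d) ℂ) :
    (WE d E * piKronecker fun _ : E => A).trace
      = ((d : ℂ) + 1) ^ ((1 : ℤ) - (Fintype.card E : ℤ)) / 2
          * ((1 + (d : ℂ) • phiM d) * A).trace ^ Fintype.card E
        - (d : ℂ) * (phiM d * A).trace ^ Fintype.card E := by
  rw [WE_eq_piKronecker, add_mul, Matrix.smul_mul, Matrix.smul_mul, Matrix.trace_add,
    Matrix.trace_smul, Matrix.trace_smul, trace_piKronecker_const_mul_piKronecker_const,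
    trace_piKronecker_const_mul_piKronecker_const, smul_eq_mul, smul_eq_mul]
  ring

end Network

theorem stmt_12_general (d : ℕ) (hd : d ≠ 0) (E : Type*) [Fintype E] [DecidableEq E] (p : ℝ) :
    (WE d E * ipen d E p).trace
      = (((d : ℂ) + 1) / 2) * (((1 + ((d : ℂ) - 1) * (p : ℂ)) / (d : ℂ)) ^ Fintype.card E)
        - (d : ℂ) * (((1 + ((d : ℂ) ^ 2 - 1) * (p : ℂ)) / (d : ℂ) ^ 2) ^ Fintype.card E) := by
  have normalization_cancels :
      ((d : ℂ) + 1) ^ ((1 : ℤ) - (Fintype.card E : ℤ)) * ((d : ℂ) + 1) ^ Fintype.card E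
        = (d : ℂ) + 1 := by
    rw [← zpow_natCast, ← zpow_add₀ (Nat.cast_add_one_ne_zero d), sub_add_cancel, zpow_one]
  rw [ipen_eq_piKronecker, trace_WE_mul_piKronecker_const,
    trace_one_add_smul_phiM_mul_isotropic hd, trace_phiM_mul_isotropic hd, mul_pow, ← mul_assoc,
    div_mul_eq_mul_div, normalization_cancels]

/-- Trace of the `E`-SSW against the isotropic pair-entangled network state:
`Tr(W_E ρ) = ((d+1)/2)·((1+(d−1)p)/d)^{|E|} − d·((1+(d²−1)p)/d²)^{|E|}`. -/
theorem stmt_12 (d : ℕ) (hd : 2 ≤ d) (E : Type*) [Fintype E] [DecidableEq E] [Nonempty E]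
    (p : ℝ) (hp0 : 0 ≤ p) (hp1 : p ≤ 1) :
    (WE d E * ipen d E p).trace
      = (((d : ℂ) + 1) / 2) * (((1 + ((d : ℂ) - 1) * (p : ℂ)) / (d : ℂ)) ^ Fintype.card E)
        - (d : ℂ) * (((1 + ((d : ℂ) ^ 2 - 1) * (p : ℂ)) / (d : ℂ) ^ 2) ^ Fintype.card E) :=
  stmt_12_general d (by omega) E p
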